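/- arXiv:0706.1092 — 2 statements merged into one kernel-verified Lean document; each statement's English description precedes it below -/
import Mathlib

section
/- Let P be a polytope in ℝ^k with vertices in ℚ_{≥0}^k, let m ∈ ℕ be such that the vertices of mP lie in ℕ₀^k, and let χ : ℕ₀^k → X be an additive coloring. Then there exist a constant N and polynomials p₀, p₁, …, p_{m−1} such that for all integers n ≥ N, if n ≡ r (mod m) with 0 ≤ r < m, then the number of colors |χ(nP ∩ ℕ₀^k)| equals p_r(n); i.e., |χ(nP ∩ ℕ₀^k)| is for large n given by a quasipolynomial with period m. -/
open Pointwise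

/-!
For large `n`, every point of `(n + m)P` has some vertex `v` of `P` with barycentric weight at least
`m / (n + m)`; splitting off the lattice point `mv` shows that the lattice points of `(n + m)P` are
the sums of a vertex of `mP` and a lattice point of `nP`. So within a residue class modulo `m` the
sets to be colored have, from some index on, the form `S + qW` with `S` and `W` finite.

A point of `S + qW` is encoded by some `b ∈ S` and a vector of exponents on `W` of degree `q`.
Each color is represented by its lexicographically least code. By additivity, a code stays
non-minimal when its exponents are increased, so for each `b` the exponents of minimal codes form a
lower set. By Dickson's lemma and inclusion–exclusion, the number of elements of degree `q` of a
lower set in `ℕ ^ W` is eventually a polynomial in `q`.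
-/

open Filter Polynomial

/-- A sequence agrees with a polynomial function from some index on. -/
def EventuallyPolynomial {K : Type*} [Semiring K] (f : ℕ → K) : Prop :=
  ∃ p : K[X], ∀ᶠ n : ℕ in atTop, f n = p.eval (n : K)

namespace EventuallyPolynomial

lemma sum {K ι : Type*} [Semiring K] {s : Finset ι} {f : ι → ℕ → K}
    (hf : ∀ i ∈ s, EventuallyPolynomial (f i)) :
    EventuallyPolynomial fun n ↦ ∑ i ∈ s, f i n := by
  choose! p hp using hf
  refine ⟨∑ i ∈ s, p i, ?_⟩
  filter_upwards [(eventually_all_finset s).2 hp] with n hn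
  rw [eval_finsetSum, Finset.sum_congr rfl hn]

lemma const_mul {K : Type*} [Semiring K] {f : ℕ → K} (c : K) (hf : EventuallyPolynomial f) :
    EventuallyPolynomial fun n ↦ c * f n := by
  obtain ⟨p, hp⟩ := hf
  exact ⟨C c * p, hp.mono fun n hn ↦ by simp [hn]⟩

lemma of_comp_add {K : Type*} [CommRing K] {f : ℕ → K} (t : ℕ)
    (hf : EventuallyPolynomial fun n ↦ f (n + t)) : EventuallyPolynomial f := by
  obtain ⟨p, hp⟩ := hf
  refine ⟨p.comp (X - C (t : K)), ?_⟩
  filter_upwards [(tendsto_sub_atTop_nat t).eventually hp, eventually_ge_atTop t] with n hn htn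
  rw [Nat.sub_add_cancel htn] at hn
  simp [hn, Nat.cast_sub htn]

lemma natCast_multichoose (K : Type*) [Field K] [CharZero K] (s : ℕ) :
    EventuallyPolynomial fun n ↦ (s.multichoose n : K) := by
  rcases s with _ | d
  · refine ⟨0, (eventually_ge_atTop 1).mono fun n hn ↦ ?_⟩
    obtain ⟨n, rfl⟩ := Nat.exists_eq_add_of_le' hn
    simp
  · refine ⟨preHilbertPoly K d 0, .of_forall fun n ↦ ?_⟩
    have hsymm : (d + 1).multichoose n = (n + d).choose d := by
      rw [Nat.multichoose_eq, Nat.add_right_comm, Nat.add_sub_cancel, Nat.add_comm,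
        Nat.choose_symm_add]
    simpa [hsymm] using (preHilbertPoly_eq_choose_sub_add K d n.zero_le).symm

lemma exists_quasipolynomial {K : Type*} [Field K] [CharZero K] {m : ℕ} (hm : 0 < m) {f : ℕ → K}
    (hf : ∀ r : Fin m, EventuallyPolynomial fun q ↦ f (m * q + r)) :
    ∃ (N : ℕ) (p : Fin m → K[X]), ∀ n : ℕ, N ≤ n →
      f n = (p ⟨n % m, Nat.mod_lt n hm⟩).eval (n : K) := by
  choose p hp using hf
  have hall : ∀ᶠ q in atTop, ∀ r : Fin m, f (m * q + r) = (p r).eval (q : K) :=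
    eventually_all.2 hp
  obtain ⟨N, hN⟩ := eventually_atTop.1 ((Nat.tendsto_div_const_atTop hm.ne').eventually hall)
  refine ⟨N, fun r ↦ (p r).comp (C (m : K)⁻¹ * (X - C ((r : ℕ) : K))), fun n hn ↦ ?_⟩
  have hquot : (m : K)⁻¹ * (n - (n % m : ℕ)) = (n / m : ℕ) := by
    rw [inv_mul_eq_iff_eq_mul₀ (by exact_mod_cast hm.ne'), sub_eq_iff_eq_add]
    exact_mod_cast (Nat.div_add_mod n m).symm
  have hfn := hN n hn ⟨n % m, Nat.mod_lt n hm⟩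
  rw [Nat.div_add_mod] at hfn
  simp [hfn, hquot]

end EventuallyPolynomial

open scoped Finset in
lemma card_filter_forall_not_le {R α : Type*} [CommRing R] [SemilatticeSup α] [OrderBot α]
    [DecidableLE α] (D F : Finset α) :
    (#{x ∈ D | ∀ a ∈ F, ¬ a ≤ x} : R) =
      ∑ T ∈ F.powerset, (-1) ^ #T * (#{x ∈ D | T.sup id ≤ x} : R) := by
  classical
  have hexpand (x : α) : (if ∀ a ∈ F, ¬ a ≤ x then 1 else 0 : R) =
      ∑ T ∈ F.powerset, (-1) ^ #T * if T.sup id ≤ x then 1 else 0 := by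
    have h := Finset.prod_sub (fun _ ↦ (1 : R)) (fun a ↦ if a ≤ x then 1 else 0) F
    simp only [Finset.prod_const_one, mul_one, Finset.prod_boole] at h
    simp only [Finset.sup_le_iff, id_eq, ← h]
    rw [← Finset.prod_boole]
    exact Finset.prod_congr rfl fun a _ ↦ by split_ifs <;> simp
  simp only [Finset.natCast_card_filter, hexpand, Finset.mul_sum]
  exact Finset.sum_comm

/-- Dickson's lemma. -/
lemma exists_finset_forall_mem_iff_of_isUpperSet {α : Type*} [PartialOrder α] [WellQuasiOrderedLE α]
    {U : Set α} (hU : IsUpperSet U) : ∃ F : Finset α, ∀ x, x ∈ U ↔ ∃ a ∈ F, a ≤ x := by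
  have hfin : {a | Minimal (· ∈ U) a}.Finite :=
    WellQuasiOrderedLE.finite_of_isAntichain (setOfPred_minimal_antichain _)
  refine ⟨hfin.toFinset, fun x ↦ ⟨fun hx ↦ ?_, ?_⟩⟩
  · obtain ⟨a, hax, ha⟩ := exists_minimal_le_of_wellFoundedLT (· ∈ U) x hx
    exact ⟨a, hfin.mem_toFinset.2 ha, hax⟩
  · rintro ⟨a, ha, hax⟩
    exact hU hax (hfin.mem_toFinset.1 ha).prop

section LowerSets

open Finsupp

variable {σ K : Type*} [Finite σ] [Field K] [CharZero K]

lemma ncard_degree_preimage_singleton (n : ℕ) :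
    (degree (σ := σ) (R := ℕ) ⁻¹' {n}).ncard = (Nat.card σ).multichoose n := by
  classical
  have := Fintype.ofFinite σ
  have h : degree (σ := σ) (R := ℕ) ⁻¹' {n} =
      ((Finset.univ.finsuppAntidiag n : Finset (σ →₀ ℕ)) : Set (σ →₀ ℕ)) := by
    ext u
    simp [degree_eq_sum]
  rw [h, Set.ncard_coe_finset, Finset.card_finsuppAntidiag_nat_eq_multichoose, Finset.card_univ,
    Nat.card_eq_fintype_card]

lemma eventuallyPolynomial_ncard_Ici (a : σ →₀ ℕ) :
    EventuallyPolynomial fun q ↦ ((Set.Ici a ∩ degree ⁻¹' {q}).ncard : K) := by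
  refine .of_comp_add a.degree ?_
  have htranslate (q : ℕ) : Set.Ici a ∩ degree ⁻¹' {q + a.degree} =
      (fun u ↦ u + a) '' (degree ⁻¹' {q}) := by
    ext u
    constructor
    · rintro ⟨hau, hu⟩
      obtain ⟨v, rfl⟩ := exists_add_of_le (Set.mem_Ici.1 hau)
      refine ⟨v, ?_, add_comm v a⟩
      simpa [add_comm a.degree] using hu
    · rintro ⟨v, hv, rfl⟩
      exact ⟨Set.mem_Ici.2 le_add_self, by simpa using hv⟩
  simp only [htranslate, Set.ncard_image_of_injective _ (add_left_injective a),
    ncard_degree_preimage_singleton]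
  exact .natCast_multichoose K _

lemma eventuallyPolynomial_ncard_isLowerSet {L : Set (σ →₀ ℕ)} (hL : IsLowerSet L) :
    EventuallyPolynomial fun q ↦ ((L ∩ degree ⁻¹' {q}).ncard : K) := by
  classical
  obtain ⟨F, hF⟩ := exists_finset_forall_mem_iff_of_isUpperSet hL.compl
  have hL_iff (u : σ →₀ ℕ) : u ∈ L ↔ ∀ a ∈ F, ¬ a ≤ u := by
    simpa using (hF u).not
  let D (q : ℕ) : Finset (σ →₀ ℕ) := (finite_of_degree_eq (σ := σ) q).toFinset
  have hcount (q : ℕ) : ((L ∩ degree ⁻¹' {q}).ncard : K) =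
      ∑ T ∈ F.powerset, (-1) ^ T.card * ((Set.Ici (T.sup id) ∩ degree ⁻¹' {q}).ncard : K) := by
    have hslice (A : Set (σ →₀ ℕ)) [DecidablePred (· ∈ A)] :
        A ∩ degree ⁻¹' {q} = ↑{u ∈ D q | u ∈ A} := by
      ext u
      simp [D, and_comm]
    simp only [hslice, Set.ncard_coe_finset, hL_iff, Set.mem_Ici]
    convert card_filter_forall_not_le (D q) F
  simp only [hcount]
  exact .sum fun T _ ↦ (eventuallyPolynomial_ncard_Ici _).const_mul _

end LowerSets

section LeastRepresentatives

open Finsupp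

variable {σ β Y : Type*} [LinearOrder σ] [LinearOrder β]

/-- The exponents `u` for which `(b, u)` is the lexicographically least pair with its value under
`f` and its degree of the second component. -/
def leastRepresentatives (f : β → (σ →₀ ℕ) → Y) (b : β) : Set (σ →₀ ℕ) :=
  {u | ∀ b' u', u'.degree = u.degree → f b' u' = f b u →
    toLex (b, toLex u) ≤ toLex (b', toLex u')}

lemma isLowerSet_leastRepresentatives {f : β → (σ →₀ ℕ) → Y}
    (hf : ∀ b b' u u' e, f b u = f b' u' → f b (u + e) = f b' (u' + e)) (b : β) :
    IsLowerSet (leastRepresentatives f b) := by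
  intro v u huv hv b' u' hdeg hval
  obtain ⟨e, rfl⟩ := exists_add_of_le huv
  have hle := hv b' (u' + e) (by simp [hdeg]) (hf _ _ _ _ e hval)
  simpa [Prod.Lex.toLex_le_toLex, toLex_add] using hle

lemma bijOn_leastRepresentatives [Finite σ] [WellFoundedLT β] (f : β → (σ →₀ ℕ) → Y) (q : ℕ) :
    Set.BijOn (fun x : Σ _ : β, σ →₀ ℕ ↦ f x.1 x.2)
      (Set.univ.sigma fun b ↦ leastRepresentatives f b ∩ degree ⁻¹' {q})
      (⋃ b, f b '' (degree ⁻¹' {q})) := by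
  refine ⟨?_, ?_, ?_⟩
  · rintro ⟨b, u⟩ ⟨-, -, hu⟩
    exact Set.mem_iUnion.2 ⟨b, u, hu, rfl⟩
  · rintro ⟨b, u⟩ ⟨-, hleast, hu⟩ ⟨b', u'⟩ ⟨-, hleast', hu'⟩ hval
    have heq := le_antisymm (hleast b' u' (hu'.trans hu.symm) hval.symm)
      (hleast' b u (hu.trans hu'.symm) hval)
    simpa using heq
  · intro y hy
    let s : Set (β ×ₗ Lex (σ →₀ ℕ)) :=
      {x | (ofLex (ofLex x).2).degree = q ∧ f (ofLex x).1 (ofLex (ofLex x).2) = y}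
    have hs : s.Nonempty := by
      obtain ⟨b, u, hu, huy⟩ := Set.mem_iUnion.1 hy
      exact ⟨toLex (b, toLex u), hu, huy⟩
    obtain ⟨x, ⟨hdeg, hval⟩, hmin⟩ := wellFounded_lt.has_min s hs
    refine ⟨⟨(ofLex x).1, ofLex (ofLex x).2⟩, ⟨trivial, fun b' u' hdeg' hval' ↦ ?_, hdeg⟩, hval⟩
    exact not_lt.1 (hmin (toLex (b', toLex u')) ⟨hdeg'.trans hdeg, hval'.trans hval⟩)

lemma ncard_iUnion_image_degree_preimage [Finite σ] [Fintype β] (f : β → (σ →₀ ℕ) → Y) (q : ℕ) :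
    (⋃ b, f b '' (degree ⁻¹' {q})).ncard =
      ∑ b, (leastRepresentatives f b ∩ degree ⁻¹' {q}).ncard := by
  have hfin (b : β) : (leastRepresentatives f b ∩ degree ⁻¹' {q}).Finite :=
    (finite_of_degree_eq q).subset Set.inter_subset_right
  have hsigma : (Set.univ.sigma fun b ↦ leastRepresentatives f b ∩ degree ⁻¹' {q}) =
      ((Finset.univ.sigma fun b ↦ (hfin b).toFinset : Finset (Σ _ : β, σ →₀ ℕ)) : Set _) := by
    simp
  rw [← (bijOn_leastRepresentatives f q).ncard_eq, hsigma, Set.ncard_coe_finset,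
    Finset.card_sigma]
  exact Finset.sum_congr rfl fun b _ ↦ (Set.ncard_eq_toFinset_card _ (hfin b)).symm

lemma eventuallyPolynomial_ncard_iUnion_image {K : Type*} [Field K] [CharZero K] [Finite σ]
    [Finite β] {f : β → (σ →₀ ℕ) → Y}
    (hf : ∀ b b' u u' e, f b u = f b' u' → f b (u + e) = f b' (u' + e)) :
    EventuallyPolynomial fun q ↦ ((⋃ b, f b '' (degree ⁻¹' {q})).ncard : K) := by
  have := Fintype.ofFinite β
  simp only [ncard_iUnion_image_degree_preimage, Nat.cast_sum]
  exact .sum fun b _ ↦ eventuallyPolynomial_ncard_isLowerSet (isLowerSet_leastRepresentatives hf b)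

end LeastRepresentatives

/-- A coloring of an additive structure is additive if the color of a sum depends only on the
colors of the summands. -/
def IsAdditiveColoring {M X : Type*} [Add M] (χ : M → X) : Prop :=
  ∀ a b c d, χ a = χ c → χ b = χ d → χ (a + b) = χ (c + d)

lemma weight_image_degree_preimage_succ {ι M : Type*} [AddCommMonoid M] (w : ι → M) (q : ℕ) :
    Finsupp.weight w '' (Finsupp.degree ⁻¹' {q + 1}) =
      Set.range w + Finsupp.weight w '' (Finsupp.degree ⁻¹' {q}) := by
  have hrange : Finsupp.weight w '' (Finsupp.degree (R := ℕ) ⁻¹' {1}) = Set.range w := by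
    have hdeg : Finsupp.degree (σ := ι) (R := ℕ) ⁻¹' {1} = Set.range (Finsupp.single · 1) :=
      Finsupp.range_single_one.symm
    rw [hdeg, ← Set.range_comp]
    congr 1
    ext i
    simp [Finsupp.weight_single]
  rw [← hrange, ← Set.image_add, ← Finsupp.degree_preimage_add, Set.singleton_add_singleton,
    add_comm]

lemma eq_add_weight_image_of_succ_eq {ι M : Type*} [AddCommMonoid M] {w : ι → M} {S : ℕ → Set M}
    (hS : ∀ q, S (q + 1) = Set.range w + S q) (q : ℕ) :
    S q = S 0 + Finsupp.weight w '' (Finsupp.degree ⁻¹' {q}) := by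
  induction q with
  | zero =>
    have hzero : Finsupp.degree (σ := ι) (R := ℕ) ⁻¹' {0} = {0} := by
      ext u
      simp [Finsupp.degree_eq_zero_iff]
    simp [hzero]
  | succ q ih => rw [hS, weight_image_degree_preimage_succ, add_left_comm, ← ih]

/-- For injective `χ` and `S q = S 0 + q • W` this is Khovanskii's theorem on iterated sumsets. -/
theorem eventuallyPolynomial_ncard_image_of_succ_eq_add {K M X : Type*} [Field K] [CharZero K]
    [AddCommMonoid M] {χ : M → X} (hχ : IsAdditiveColoring χ) {W : Set M} (hW : W.Finite)
    {S : ℕ → Set M} (hfin : ∀ᶠ q in atTop, (S q).Finite)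
    (hS : ∀ᶠ q in atTop, S (q + 1) = W + S q) :
    EventuallyPolynomial fun q ↦ ((χ '' S q).ncard : K) := by
  obtain ⟨N, hN⟩ := eventually_atTop.1 (hfin.and hS)
  obtain ⟨s, w, rfl⟩ := hW.fin_embedding
  obtain ⟨t, b, hb⟩ := (hN N le_rfl).1.fin_embedding
  let f (c : Fin t) (u : Fin s →₀ ℕ) : X := χ (b c + Finsupp.weight w u)
  have himage (q : ℕ) : χ '' S (q + N) = ⋃ c, f c '' (Finsupp.degree ⁻¹' {q}) := by
    have hsum := eq_add_weight_image_of_succ_eq (w := w) (S := fun q ↦ S (q + N))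
      (fun q ↦ by rw [Nat.add_right_comm, (hN _ (Nat.le_add_left N q)).2]) q
    simp only [hsum, zero_add, ← hb, ← Set.iUnion_add_left_image, Set.image_iUnion, Set.image_image,
      Set.biUnion_range, f]
  refine .of_comp_add N ?_
  simp only [himage]
  refine eventuallyPolynomial_ncard_iUnion_image fun c c' u u' e h ↦ ?_
  simpa only [f, map_add, add_assoc] using hχ _ (Finsupp.weight w e) _ _ h rfl

/-- By pigeonhole, each point of the hull has some vertex with weight at least `s / (s + t)`, which
can be split off. -/
lemma add_smul_convexHull_finset {R E : Type*} [Field R] [LinearOrder R] [IsStrictOrderedRing R]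
    [AddCommGroup E] [Module R E] (V : Finset E) {s t : R} (hs : 0 ≤ s)
    (hst : V.card * s ≤ t) :
    (s + t) • convexHull R (V : Set E) = s • (V : Set E) + t • convexHull R (V : Set E) := by
  rcases V.eq_empty_or_nonempty with rfl | hne
  · simp
  have ht : 0 ≤ t := (mul_nonneg V.card.cast_nonneg hs).trans hst
  rcases ht.eq_or_lt with rfl | ht
  · have hV : (0 : R) < V.card := mod_cast hne.card_pos
    obtain rfl : s = 0 := hs.antisymm' (nonpos_of_mul_nonpos_right hst hV)
    simp [Set.zero_smul_set, hne]
  refine Set.Subset.antisymm ?_ ?_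
  · rintro _ ⟨x, hx, rfl⟩
    obtain ⟨w, hw, hsum, rfl⟩ := Finset.mem_convexHull'.1 hx
    obtain ⟨v, hv, hsv⟩ : ∃ v ∈ V, s ≤ (s + t) * w v := by
      refine Finset.exists_le_of_sum_le hne ?_
      rw [← Finset.mul_sum, hsum, Finset.sum_const, nsmul_eq_mul]
      linarith
    classical
    let u (y : E) : R := (s + t) * w y - if y = v then s else 0
    have hu : ∀ y ∈ V, 0 ≤ u y := fun y hy ↦ by
      by_cases h : y = v
      · simpa [u, h] using hsv
      · simpa [u, h] using mul_nonneg (by positivity) (hw y hy)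
    have husum : ∑ y ∈ V, u y = t := by
      simp [u, Finset.sum_sub_distrib, ← Finset.mul_sum, hsum, hv]
    have hucomb : ∑ y ∈ V, u y • y = (s + t) • ∑ y ∈ V, w y • y - s • v := by
      simp [u, sub_smul, mul_smul, Finset.smul_sum, ite_smul, hv]
    have hmem := V.centerMass_id_mem_convexHull hu (husum.symm ▸ ht)
    refine ⟨s • v, Set.smul_mem_smul_set hv, _, Set.smul_mem_smul_set hmem, ?_⟩
    simp [Finset.centerMass, husum, smul_inv_smul₀ ht.ne', hucomb]
  · rw [(convex_convexHull R _).add_smul hs ht.le]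
    exact Set.add_subset_add_right (Set.smul_set_mono (subset_convexHull R _))

section LatticePoints

/-- The points of `ℕ^ι` lying in `P ⊆ ℝ^ι`. -/
def latticePoints {ι : Type*} (P : Set (ι → ℝ)) : Set (ι → ℕ) :=
  {a | (fun i ↦ (a i : ℝ)) ∈ P}

variable {ι : Type*}

lemma finite_latticePoints [Finite ι] {P : Set (ι → ℝ)} (hP : BddAbove P) :
    (latticePoints P).Finite := by
  classical
  have := Fintype.ofFinite ι
  obtain ⟨c, hc⟩ := hP
  refine (Set.finite_Iic fun i ↦ ⌊c i⌋₊).subset fun a ha i ↦ ?_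
  exact Nat.le_floor (hc ha i)

lemma latticePoints_add {A B : Set (ι → ℝ)} (hA : ∀ x ∈ A, ∀ i, ∃ n : ℕ, x i = n)
    (hB : B ⊆ Set.Ici 0) : latticePoints (A + B) = latticePoints A + latticePoints B := by
  ext c
  constructor
  · rintro ⟨x, hx, y, hy, hxy⟩
    choose a ha using hA x hx
    obtain rfl : x = fun i ↦ (a i : ℝ) := funext ha
    have hy_eq (i : ι) : y i = (c i : ℝ) - a i := eq_sub_of_add_eq' (congrFun hxy i)
    have hac (i : ι) : a i ≤ c i := by
      rw [← Nat.cast_le (α := ℝ), ← sub_nonneg, ← hy_eq]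
      exact hB hy i
    refine ⟨a, hx, c - a, ?_, funext fun i ↦ Nat.add_sub_cancel' (hac i)⟩
    have hcast : (fun i ↦ ((c - a) i : ℝ)) = y := by
      ext i
      simp [hy_eq, Nat.cast_sub (hac i)]
    rwa [latticePoints, Set.mem_ofPred_eq, hcast]
  · rintro ⟨a, ha, b, hb, rfl⟩
    exact ⟨_, ha, _, hb, by ext i; simp⟩

lemma latticePoints_add_smul_convexHull {V : Finset (ι → ℝ)} {m : ℕ} (hm : 0 < m)
    (hmV : ∀ v ∈ V, ∀ i, ∃ t : ℕ, (m : ℝ) * v i = t) {n : ℕ} (hVn : V.card * m ≤ n) :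
    latticePoints (((m + n : ℕ) : ℝ) • convexHull ℝ (V : Set (ι → ℝ))) =
      latticePoints ((m : ℝ) • (V : Set (ι → ℝ))) +
        latticePoints ((n : ℝ) • convexHull ℝ (V : Set (ι → ℝ))) := by
  have hV : (V : Set (ι → ℝ)) ⊆ Set.Ici 0 := fun v hv i ↦ by
    obtain ⟨t, ht⟩ := hmV v hv i
    exact nonneg_of_mul_nonneg_right (ht ▸ t.cast_nonneg) (by positivity)
  rw [Nat.cast_add, add_smul_convexHull_finset V m.cast_nonneg (mod_cast hVn)]
  refine latticePoints_add ?_ ?_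
  · rintro _ ⟨v, hv, rfl⟩
    exact hmV v hv
  · rintro _ ⟨x, hx, rfl⟩
    exact smul_nonneg n.cast_nonneg (Set.mem_Ici.1 (convexHull_min hV (convex_Ici 0) hx))

lemma finite_latticePoints_smul_convexHull [Finite ι] (V : Finset (ι → ℝ)) (c : ℝ) :
    (latticePoints (c • convexHull ℝ (V : Set (ι → ℝ)))).Finite := by
  have := Fintype.ofFinite ι
  exact finite_latticePoints
    ((isBounded_convexHull.2 V.finite_toSet.isBounded).smul₀ c).bddAbove

end LatticePoints

/-- Let `P` be a polytope in `ℝ^k` with vertices in `ℚ_{≥0}^k`, let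
`m ∈ ℕ` be such that the vertices of `mP` lie in `ℕ₀^k`, and let `χ : ℕ₀^k → X` be an
additive coloring. Then for large `n` the number of colors `|χ(nP ∩ ℕ₀^k)|` is given by
a quasipolynomial with period `m`: there are `N` and polynomials `p_r`, `0 ≤ r < m`,
such that for `n ≥ N` with `n ≡ r (mod m)` the number of colors equals `p_r(n)`. -/
theorem number_of_colors_in_dilated_rational_polytope_eventually_quasipolynomial
    {k : ℕ} {X : Type*} (V : Finset (Fin k → ℝ)) (hVne : V.Nonempty)
    (hV : ∀ v ∈ V, ∀ i, ∃ q : ℚ, 0 ≤ q ∧ v i = (q : ℝ))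
    (m : ℕ) (hm : 0 < m)
    (hmV : ∀ v ∈ V, ∀ i, ∃ t : ℕ, (m : ℝ) * v i = (t : ℝ))
    (χ : (Fin k → ℕ) → X)
    (hχ : ∀ a b c d : Fin k → ℕ, χ a = χ c → χ b = χ d → χ (a + b) = χ (c + d)) :
    ∃ (N : ℕ) (p : Fin m → Polynomial ℝ), ∀ n : ℕ, N ≤ n →
      ((χ '' {a : Fin k → ℕ |
          (fun i => (a i : ℝ)) ∈ (n : ℝ) • convexHull ℝ (V : Set (Fin k → ℝ))}).ncard : ℝ)
        = (p ⟨n % m, Nat.mod_lt n hm⟩).eval (n : ℝ) := by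
  let S (n : ℕ) : Set (Fin k → ℕ) := latticePoints ((n : ℝ) • convexHull ℝ V)
  let W : Set (Fin k → ℕ) := latticePoints ((m : ℝ) • V)
  have hW : W.Finite := finite_latticePoints V.finite_toSet.smul_set.bddAbove
  have hS (n : ℕ) : (S n).Finite := finite_latticePoints_smul_convexHull V n
  suffices hrec : ∀ r : ℕ, ∀ᶠ q in atTop, S (m * (q + 1) + r) = W + S (m * q + r) from
    EventuallyPolynomial.exists_quasipolynomial (f := fun n ↦ ((χ '' S n).ncard : ℝ)) hm fun r ↦
      eventuallyPolynomial_ncard_image_of_succ_eq_add hχ hW (.of_forall fun q ↦ hS _) (hrec r)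
  intro r
  filter_upwards [eventually_ge_atTop V.card] with q hq
  have hle : V.card * m ≤ m * q + r := mul_comm m V.card ▸ le_add_right (Nat.mul_le_mul_left m hq)
  rw [← latticePoints_add_smul_convexHull hm hmV hle, mul_add_one, add_right_comm, add_comm]
end

section
/- Let A be a finite subset of a commutative semigroup (G,+). Then there exist a constant c > 0 and a polynomial p such that for all integers n > c, the cardinality |n*A| of the n-fold sumset equals p(n). -/
open Pointwise

/-- The `n`-fold sumset `n*A = {a₁+⋯+a_n : aᵢ ∈ A}` in a (commutative) semigroup,
defined for `n ≥ 1` (the value at `n = 0` is an irrelevant junk value `∅`). -/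
def nmulSet {G : Type*} [Add G] (A : Set G) : ℕ → Set G
  | 0 => ∅
  | 1 => A
  | n + 2 => nmulSet A (n + 1) + A

/-!
Write `A = {a₁, …, aₖ}` and map an exponent vector `x` of degree `n` to `x₁a₁ + ⋯ + xₖaₖ ∈ n*A`.
Choose in each fibre the vector that is least in a monomial order. The vectors that are *not* chosen
form an upper set, since translating a smaller representative of `x` by `z` gives a smaller
representative of `x + z`. By Dickson's lemma this upper set is a finite union of cones `m + ℕᵏ`,
and the number of vectors of degree `n` avoiding finitely many cones is eventually polynomial:
removing the cones one at a time reduces this to a single cone, whose count is a binomial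
coefficient.
-/

open Filter Finsupp Polynomial
open scoped MonomialOrder

/-- The sequence `f` agrees with a polynomial function at all sufficiently large arguments. -/
def IsEventuallyPolynomial {K : Type*} [Semiring K] (f : ℕ → K) : Prop :=
  ∃ p : K[X], ∀ᶠ n : ℕ in atTop, f n = p.eval (n : K)

namespace IsEventuallyPolynomial

theorem congr {K : Type*} [Semiring K] {f g : ℕ → K} (hf : IsEventuallyPolynomial f)
    (hfg : f =ᶠ[atTop] g) : IsEventuallyPolynomial g := by
  obtain ⟨p, hp⟩ := hf
  exact ⟨p, hfg.symm.trans hp⟩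

theorem sub {K : Type*} [Ring K] {f g : ℕ → K} (hf : IsEventuallyPolynomial f)
    (hg : IsEventuallyPolynomial g) : IsEventuallyPolynomial (f - g) := by
  obtain ⟨p, hp⟩ := hf
  obtain ⟨q, hq⟩ := hg
  refine ⟨p - q, ?_⟩
  filter_upwards [hp, hq] with n hpn hqn
  rw [Pi.sub_apply, hpn, hqn, eval_sub]

theorem multichoose_sub (K : Type*) [Field K] [CharZero K] (r k : ℕ) :
    IsEventuallyPolynomial fun n => (r.multichoose (n - k) : K) := by
  cases r with
  | zero =>
    refine ⟨0, (eventually_gt_atTop k).mono fun n hn => ?_⟩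
    obtain ⟨j, hj⟩ := Nat.exists_eq_succ_of_ne_zero (Nat.sub_pos_of_lt hn).ne'
    simp only [hj, Nat.multichoose_zero_succ, Nat.cast_zero, eval_zero]
  | succ d =>
    refine ⟨preHilbertPoly K d k, (eventually_ge_atTop k).mono fun n hn => ?_⟩
    have hchoose : (d + 1).multichoose (n - k) = (n - k + d).choose d := by
      rw [Nat.multichoose_eq, show d + 1 + (n - k) - 1 = n - k + d by omega, Nat.choose_symm_add]
    rw [preHilbertPoly_eq_choose_sub_add K d hn, ← hchoose]

end IsEventuallyPolynomial

theorem exists_finite_upperClosure_eq {α : Type*} [PartialOrder α] [WellQuasiOrderedLE α]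
    {U : Set α} (hU : IsUpperSet U) :
    ∃ M : Set α, M.Finite ∧ (upperClosure M : Set α) = U := by
  refine ⟨{x | Minimal (· ∈ U) x},
    WellQuasiOrderedLE.finite_of_isAntichain (setOfPred_minimal_antichain _), ?_⟩
  ext x
  refine ⟨fun ⟨y, hy, hyx⟩ => hU hyx hy.prop, fun hx => ?_⟩
  obtain ⟨y, hyx, hy⟩ := exists_minimal_le_of_wellFoundedLT (· ∈ U) x hx
  exact ⟨y, hy, hyx⟩

/-- The Hilbert function of a set `S` of exponent vectors: the number of elements of `S` of each
degree, i.e. the Hilbert function of the span of the monomials with exponent in `S`. -/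
noncomputable def hilbertFunction {ι : Type*} (S : Set (ι →₀ ℕ)) (n : ℕ) : ℕ :=
  {x ∈ S | x.degree = n}.ncard

section HilbertFunction

variable {ι : Type*} [Finite ι]

theorem hilbertFunction_sdiff_add {S T : Set (ι →₀ ℕ)} (hTS : T ⊆ S) (n : ℕ) :
    hilbertFunction (S \ T) n + hilbertFunction T n = hilbertFunction S n := by
  have hfin : {x ∈ S | x.degree = n}.Finite := (finite_of_degree_eq n).subset fun _ hx => hx.2
  have hdiff : {x ∈ S \ T | x.degree = n} = {x ∈ S | x.degree = n} \ {x ∈ T | x.degree = n} := by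
    ext x
    simp only [Set.mem_ofPred_eq, Set.mem_sdiff]
    tauto
  rw [hilbertFunction, hdiff]
  exact Set.ncard_sdiff_add_ncard_of_subset (fun x hx => ⟨hTS hx.1, hx.2⟩) hfin

theorem ncard_degree_eq (n : ℕ) :
    {x : ι →₀ ℕ | x.degree = n}.ncard = (Nat.card ι).multichoose n := by
  classical
  have := Fintype.ofFinite ι
  have hantidiag : {x : ι →₀ ℕ | x.degree = n} = (Finset.univ : Finset ι).finsuppAntidiag n := by
    ext x
    simp [degree_eq_sum]
  rw [hantidiag, Set.ncard_coe_finset, Finset.card_finsuppAntidiag_nat_eq_multichoose,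
    Finset.card_univ, Nat.card_eq_fintype_card]

theorem hilbertFunction_Ici (s : ι →₀ ℕ) {n : ℕ} (hn : s.degree ≤ n) :
    hilbertFunction (Set.Ici s) n = (Nat.card ι).multichoose (n - s.degree) := by
  have htranslate : {x ∈ Set.Ici s | x.degree = n} =
      (s + ·) '' {y | y.degree = n - s.degree} := by
    ext x
    constructor
    · rintro ⟨hsx, hx⟩
      obtain ⟨y, rfl⟩ := exists_add_of_le (Set.mem_Ici.1 hsx)
      rw [map_add] at hx
      exact ⟨y, Nat.eq_sub_of_add_eq' hx, rfl⟩
    · rintro ⟨y, hy, rfl⟩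
      refine ⟨self_le_add_right s y, ?_⟩
      rw [map_add, hy, Nat.add_sub_cancel' hn]
  rw [hilbertFunction, htranslate, Set.ncard_image_of_injective _ (add_right_injective s),
    ncard_degree_eq]

variable (K : Type*) [Field K] [CharZero K]

theorem isEventuallyPolynomial_hilbertFunction_Ici_sdiff_upperClosure {M : Set (ι →₀ ℕ)}
    (hM : M.Finite) (s : ι →₀ ℕ) :
    IsEventuallyPolynomial fun n => (hilbertFunction (Set.Ici s \ upperClosure M) n : K) := by
  induction M, hM using Set.Finite.induction_on generalizing s with
  | empty =>
    refine (IsEventuallyPolynomial.multichoose_sub K (Nat.card ι) s.degree).congr ?_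
    filter_upwards [eventually_ge_atTop s.degree] with n hn
    simp [hilbertFunction_Ici s hn]
  | @insert m M _ _ ih =>
    have hsplit : Set.Ici s \ upperClosure (insert m M) =
        (Set.Ici s \ upperClosure M) \ (Set.Ici (s ⊔ m) \ upperClosure M) := by
      ext x
      simp only [Set.mem_sdiff, Set.mem_Ici, SetLike.mem_coe, mem_upperClosure,
        Set.exists_mem_insert, sup_le_iff]
      grind
    have hsub : Set.Ici (s ⊔ m) \ upperClosure M ⊆ Set.Ici s \ upperClosure M :=
      Set.sdiff_subset_sdiff_left (Set.Ici_subset_Ici.2 le_sup_left)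
    refine ((ih s).sub (ih (s ⊔ m))).congr (.of_forall fun n => ?_)
    simp only [Pi.sub_apply, hsplit, ← hilbertFunction_sdiff_add hsub n, Nat.cast_add,
      add_sub_cancel_right]

theorem isEventuallyPolynomial_hilbertFunction_compl {U : Set (ι →₀ ℕ)} (hU : IsUpperSet U) :
    IsEventuallyPolynomial fun n => (hilbertFunction Uᶜ n : K) := by
  obtain ⟨M, hM, rfl⟩ := exists_finite_upperClosure_eq hU
  have h := isEventuallyPolynomial_hilbertFunction_Ici_sdiff_upperClosure K hM 0
  rwa [← bot_eq_zero, Set.Ici_bot, ← Set.compl_eq_univ_sdiff] at h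

end HilbertFunction

/-- The exponent vectors that are not the least element, in the monomial order `m`, of their fibre
under `ψ`. For the quotient of the monoid algebra by the binomial ideal of `ψ`, these are the
exponents of the initial ideal. -/
def nonminimalExponents {ι N : Type*} [AddZeroClass N] (m : MonomialOrder ι)
    (ψ : (ι →₀ ℕ) →+ N) : Set (ι →₀ ℕ) :=
  {x | ∃ y, y ≺[m] x ∧ ψ y = ψ x}

section NonminimalExponents

variable {ι N : Type*} [AddZeroClass N] (m : MonomialOrder ι) (ψ : (ι →₀ ℕ) →+ N)

theorem isUpperSet_nonminimalExponents : IsUpperSet (nonminimalExponents m ψ) := by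
  rintro x _ hxz ⟨y, hyx, hψ⟩
  obtain ⟨z, rfl⟩ := exists_add_of_le hxz
  refine ⟨y + z, ?_, by rw [map_add, map_add, hψ]⟩
  rw [map_add, map_add]
  exact add_lt_add_left hyx _

theorem injOn_compl_nonminimalExponents : Set.InjOn ψ (nonminimalExponents m ψ)ᶜ := by
  intro x hx y hy hxy
  by_contra hne
  rcases (m.toSyn.injective.ne hne).lt_or_gt with hlt | hlt
  · exact hy ⟨x, hlt, hxy⟩
  · exact hx ⟨y, hlt, hxy.symm⟩

theorem exists_notMem_nonminimalExponents (x : ι →₀ ℕ) :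
    ∃ y ∉ nonminimalExponents m ψ, ψ y = ψ x := by
  obtain ⟨y, hy, hmin⟩ := exists_minimalFor_of_wellFoundedLT (fun y => ψ y = ψ x) m.toSyn ⟨x, rfl⟩
  exact ⟨y, fun ⟨z, hzy, hz⟩ => (hmin (hz.trans hy) hzy.le).not_gt hzy, hy⟩

theorem ncard_image_degree_eq (n : ℕ) :
    (ψ '' {x | x.degree = n}).ncard =
      hilbertFunction (nonminimalExponents m (degree.prod ψ))ᶜ n := by
  symm
  refine Set.BijOn.ncard_eq (f := ψ) ⟨fun x hx => ⟨x, hx.2, rfl⟩, ?_, ?_⟩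
  · exact fun x hx y hy hxy =>
      injOn_compl_nonminimalExponents m _ hx.1 hy.1 (Prod.ext (hx.2.trans hy.2.symm) hxy)
  · rintro _ ⟨x, hx, rfl⟩
    obtain ⟨y, hy, hyx⟩ := exists_notMem_nonminimalExponents m (degree.prod ψ) x
    obtain ⟨hdeg, hψ⟩ := Prod.ext_iff.1 hyx
    exact ⟨y, ⟨hy, hdeg.trans hx⟩, hψ⟩

end NonminimalExponents

theorem nsmul_range_eq_image_linearCombination {ι M : Type*} [AddCommMonoid M] (a : ι → M)
    (n : ℕ) : n • Set.range a = linearCombination ℕ a '' {x | x.degree = n} := by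
  have h := Set.image_nsmul (linearCombination ℕ a) ((single · 1) '' Set.univ) n
  rw [nsmul_single_one_image, Set.image_image] at h
  simpa using h.symm

theorem isEventuallyPolynomial_ncard_nsmul (K : Type*) [Field K] [CharZero K] {M : Type*}
    [AddCommMonoid M] {S : Set M} (hS : S.Finite) :
    IsEventuallyPolynomial fun n => ((n • S).ncard : K) := by
  obtain ⟨k, a, -, rfl⟩ := hS.fin_param
  let φ : (Fin k →₀ ℕ) →+ M := (linearCombination ℕ a).toAddMonoidHom
  have hcard (n : ℕ) : (n • Set.range a).ncard =
      hilbertFunction (nonminimalExponents MonomialOrder.lex (degree.prod φ))ᶜ n := by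
    rw [nsmul_range_eq_image_linearCombination, ← ncard_image_degree_eq]
    rfl
  simp only [hcard]
  exact isEventuallyPolynomial_hilbertFunction_compl K (isUpperSet_nonminimalExponents _ _)

theorem image_nmulSet {G M : Type*} [Add G] [AddMonoid M] (f : G →ₙ+ M) (A : Set G) (n : ℕ) :
    f '' nmulSet A (n + 1) = (n + 1) • (f '' A) := by
  induction n with
  | zero => simp [nmulSet]
  | succ n ih => rw [nmulSet, Set.image_add, ih, succ_nsmul _ (n + 1)]

theorem card_sumset_eventually_polynomial_general (K : Type*) [Field K] [CharZero K]
    {G : Type*} [AddCommSemigroup G] {A : Set G} (hA : A.Finite) :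
    IsEventuallyPolynomial fun n => ((nmulSet A n).ncard : K) := by
  refine (isEventuallyPolynomial_ncard_nsmul K (hA.image WithZero.coeAddHom)).congr ?_
  filter_upwards [eventually_ge_atTop 1] with n hn
  obtain ⟨n, rfl⟩ := Nat.exists_eq_add_of_le' hn
  rw [← image_nmulSet]
  exact congrArg _ (Set.ncard_image_of_injective _ WithZero.coe_injective)

/-- Khovanskiĭ. Let `A` be a finite subset of a commutative
semigroup `(G,+)`. Then there exist a constant `c > 0` and a polynomial `p` such that
for all integers `n > c`, the cardinality `|n*A|` equals `p(n)`. -/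
theorem card_sumset_eventually_polynomial
    {G : Type*} [AddCommSemigroup G] (A : Set G) (hA : A.Finite) :
    ∃ c : ℕ, 0 < c ∧ ∃ p : Polynomial ℝ, ∀ n : ℕ, c < n →
      ((nmulSet A n).ncard : ℝ) = p.eval (n : ℝ) := by
  obtain ⟨p, hp⟩ := card_sumset_eventually_polynomial_general ℝ hA
  obtain ⟨c, hc⟩ := eventually_atTop.1 hp
  exact ⟨c + 1, c.succ_pos, p, fun n hn => hc n (by omega)⟩
end
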